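/- The homogeneous polynomial of degree 9 in C[x1,x2,x3] given by F = -109000*x1^6*x2^3 + 1081500*x1^5*x2^4 - 2549250*x1^4*x2^5 + 2244375*x1^3*x2^6 - 144000*x1^6*x2^2*x3 + 2074600*x1^5*x2^3*x3 - 5674500*x1^4*x2^4*x3 + 5284350*x1^3*x2^5*x3 + 358425*x1^2*x2^6*x3 - 48000*x1^6*x2*x3^2 + 1278400*x1^5*x2^2*x3^2 - 4514680*x1^4*x2^3*x3^2 + 4652580*x1^3*x2^4*x3^2 + 312930*x1^2*x2^5*x3^2 + 3645*x1*x2^6*x3^2 + 214400*x1^5*x2*x3^3 - 1482560*x1^4*x2^2*x3^3 + 2009592*x1^3*x2^3*x3^3 - 322956*x1^2*x2^4*x3^3 - 85374*x1*x2^5*x3^3 - 9477*x2^6*x3^3 - 25600*x1^5*x3^4 - 140800*x1^4*x2*x3^4 + 551328*x1^3*x2^2*x3^4 - 411984*x1^2*x2^3*x3^4 - 113616*x1*x2^4*x3^4 - 23328*x2^5*x3^4 + 15360*x1^4*x3^5 + 99072*x1^3*x2*x3^5 - 115776*x1^2*x2^2*x3^5 - 31104*x1*x2^3*x3^5 - 15552*x2^4*x3^5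 - 6656*x1^3*x3^6 - 6912*x1^2*x2*x3^6 + 2592*x1*x2^2*x3^6 - 3024*x2^3*x3^6 is irreducible in the polynomial ring C[x1,x2,x3]. -/

import Mathlib

open MvPolynomial

/-- The variables `x1, x2, x3`. -/
noncomputable def x1 : MvPolynomial (Fin 3) ℂ := X 0
noncomputable def x2 : MvPolynomial (Fin 3) ℂ := X 1
noncomputable def x3 : MvPolynomial (Fin 3) ℂ := X 2

/-- The degree-9 defining equation of the degeneration curve from the paper's
explicit example. -/
noncomputable def Fdeg : MvPolynomial (Fin 3) ℂ :=
  -109000*x1^6*x2^3 + 1081500*x1^5*x2^4 - 2549250*x1^4*x2^5 + 2244375*x1^3*x2^6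
  - 144000*x1^6*x2^2*x3 + 2074600*x1^5*x2^3*x3 - 5674500*x1^4*x2^4*x3
  + 5284350*x1^3*x2^5*x3 + 358425*x1^2*x2^6*x3 - 48000*x1^6*x2*x3^2
  + 1278400*x1^5*x2^2*x3^2 - 4514680*x1^4*x2^3*x3^2 + 4652580*x1^3*x2^4*x3^2
  + 312930*x1^2*x2^5*x3^2 + 3645*x1*x2^6*x3^2 + 214400*x1^5*x2*x3^3
  - 1482560*x1^4*x2^2*x3^3 + 2009592*x1^3*x2^3*x3^3 - 322956*x1^2*x2^4*x3^3
  - 85374*x1*x2^5*x3^3 - 9477*x2^6*x3^3 - 25600*x1^5*x3^4 - 140800*x1^4*x2*x3^4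
  + 551328*x1^3*x2^2*x3^4 - 411984*x1^2*x2^3*x3^4 - 113616*x1*x2^4*x3^4
  - 23328*x2^5*x3^4 + 15360*x1^4*x3^5 + 99072*x1^3*x2*x3^5 - 115776*x1^2*x2^2*x3^5
  - 31104*x1*x2^3*x3^5 - 15552*x2^4*x3^5 - 6656*x1^3*x3^6 - 6912*x1^2*x2*x3^6
  + 2592*x1*x2^2*x3^6 - 3024*x2^3*x3^6

open scoped Polynomial PowerSeries

/-!
Put `x1 = 1`, `x3 = t`, `x2 = y`; then `F` becomes a polynomial of degree `6` in `y` over `ℂ[t]`.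
Modulo `29` its specialisations at `t = 7` and at `t = -4` split into irreducible cubics and into
irreducible quadratics, so over `ℤ[t]` the `y`-degree of a divisor is `0` or `6`. To pass to `ℂ` we
use that the curve has a rational branch at `(1 : 0 : 0)`: by Hensel's lemma `F(1, s, t) = 0` for
some `s ∈ ℚ⟦t⟧`. Being of degree `6` over `ℤ[t]`, `s` cannot satisfy an equation of smaller degree
over `ℂ[t]`, since a linear form `ℂ → ℚ` turns such an equation into one over `ℚ[t]`. So one of
the factors in a factorisation over `ℂ[t]` has `y`-degree `0`, and it is constant because the
leading and the constant coefficient in `y` are coprime.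
-/

section Divisors

variable {K : Type*} [Field K]

lemma natDegree_dvd_natDegree_of_dvd_irreducible {g d : K[X]} (hg : Irreducible g) (hd : d ∣ g) :
    g.natDegree ∣ d.natDegree := by
  rcases hg.dvd_iff.1 hd with hu | ha
  · simp [Polynomial.natDegree_eq_zero_of_isUnit hu]
  · rw [Polynomial.natDegree_eq_of_degree_eq (Polynomial.degree_eq_degree_of_associated ha)]

lemma dvd_natDegree_of_dvd_mul {n : ℕ} {g h : K[X]} (hg : ∀ d, d ∣ g → n ∣ d.natDegree)
    (hh : ∀ d, d ∣ h → n ∣ d.natDegree) : ∀ d, d ∣ g * h → n ∣ d.natDegree := by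
  intro d hd
  obtain ⟨a, b, ha, hb, rfl⟩ := exists_dvd_and_dvd_of_dvd_mul hd
  rcases eq_or_ne (a * b) 0 with h0 | h0
  · simp [h0]
  · rw [Polynomial.natDegree_mul (left_ne_zero_of_mul h0) (right_ne_zero_of_mul h0)]
    exact dvd_add (hg a ha) (hh b hb)

lemma natDegree_map_of_dvd {R S : Type*} [CommRing R] [IsDomain R] [CommRing S] (φ : R →+* S)
    {f d : R[X]} (hf : φ f.leadingCoeff ≠ 0) (hd : d ∣ f) :
    (d.map φ).natDegree = d.natDegree := by
  obtain ⟨e, rfl⟩ := hd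
  rw [Polynomial.leadingCoeff_mul, map_mul] at hf
  exact Polynomial.natDegree_map_of_leadingCoeff_ne_zero φ (left_ne_zero_of_mul hf)

end Divisors

section MinimalDegree

variable {R S : Type*} [CommRing R] [CommRing S] [Algebra R S]

lemma natDegree_ne_zero_of_aeval_eq_zero [FaithfulSMul R S] {p : R[X]} (hp : p ≠ 0) {s : S}
    (hs : Polynomial.aeval s p = 0) : p.natDegree ≠ 0 := by
  intro h0
  rw [Polynomial.eq_C_of_natDegree_eq_zero h0, Polynomial.aeval_C,
    FaithfulSMul.algebraMap_eq_zero_iff] at hs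
  exact hp (by rw [Polynomial.eq_C_of_natDegree_eq_zero h0, hs, map_zero])

variable [IsDomain R] [IsDomain S]

lemma exists_irreducible_dvd_aeval_eq_zero [WfDvdMonoid R] {f : R[X]} (hf : f ≠ 0) {s : S}
    (hs : Polynomial.aeval s f = 0) :
    ∃ p, Irreducible p ∧ p ∣ f ∧ Polynomial.aeval s p = 0 := by
  induction f using WfDvdMonoid.induction_on_irreducible with
  | zero => exact absurd rfl hf
  | unit u hu => exact absurd hs (hu.map (Polynomial.aeval s)).ne_zero
  | mul f p hf0 hp ih =>
    rw [map_mul] at hs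
    rcases mul_eq_zero.1 hs with hs | hs
    · exact ⟨p, hp, dvd_mul_right p f, hs⟩
    · obtain ⟨q, hq, hqf, hqs⟩ := ih hf0 hs
      exact ⟨q, hq, hqf.mul_left p, hqs⟩

attribute [local instance] FractionRing.liftAlgebra in
-- By Gauss's lemma, `p` is associated to the minimal polynomial of `s` over `Frac R`.
lemma natDegree_le_of_irreducible_of_aeval_eq_zero [UniqueFactorizationMonoid R]
    [FaithfulSMul R S] {p q : R[X]} {s : S} (hp : Irreducible p) (hps : Polynomial.aeval s p = 0)
    (hq : q ≠ 0) (hqs : Polynomial.aeval s q = 0) : p.natDegree ≤ q.natDegree := by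
  let K := FractionRing R
  let L := FractionRing S
  have hroot (g : R[X]) (hg : Polynomial.aeval s g = 0) :
      Polynomial.aeval (algebraMap S L s) (g.map (algebraMap R K)) = 0 := by
    rw [Polynomial.aeval_map_algebraMap, Polynomial.aeval_algebraMap_apply, hg, map_zero]
  have hirr : Irreducible (p.map (algebraMap R K)) :=
    (hp.isPrimitive (natDegree_ne_zero_of_aeval_eq_zero hp.ne_zero hps)
      ).irreducible_iff_irreducible_map_fraction_map.1 hp
  have hdvd : p.map (algebraMap R K) ∣ q.map (algebraMap R K) :=
    (Dvd.intro _ (minpoly.eq_of_irreducible hirr (hroot p hps))).trans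
      (minpoly.dvd K _ (hroot q hqs))
  have hinj : Function.Injective (algebraMap R K) := IsFractionRing.injective R K
  simpa only [Polynomial.natDegree_map_eq_of_injective hinj] using
    Polynomial.natDegree_le_of_dvd hdvd ((Polynomial.map_ne_zero_iff hinj).2 hq)

lemma natDegree_le_of_aeval_eq_zero [UniqueFactorizationMonoid R] [FaithfulSMul R S] {f q : R[X]}
    (hf : f ≠ 0) (hdvd : ∀ d, d ∣ f → d.natDegree = 0 ∨ d.natDegree = f.natDegree) {s : S}
    (hs : Polynomial.aeval s f = 0) (hq : q ≠ 0) (hqs : Polynomial.aeval s q = 0) :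
    f.natDegree ≤ q.natDegree := by
  obtain ⟨p, hp, hpf, hps⟩ := exists_irreducible_dvd_aeval_eq_zero hf hs
  rw [← (hdvd p hpf).resolve_left (natDegree_ne_zero_of_aeval_eq_zero hp.ne_zero hps)]
  exact natDegree_le_of_irreducible_of_aeval_eq_zero hp hps hq hqs

lemma irreducible_of_isPrimitive_of_aeval_eq_zero {f : R[X]} (hf : f.IsPrimitive) {s : S}
    (hs : Polynomial.aeval s f = 0)
    (hmin : ∀ q : R[X], q ≠ 0 → Polynomial.aeval s q = 0 → f.natDegree ≤ q.natDegree) :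
    Irreducible f := by
  have key (a b : R[X]) (hab : f = a * b) (ha : Polynomial.aeval s a = 0) : IsUnit b := by
    have hne : a * b ≠ 0 := hab ▸ hf.ne_zero
    have hdeg : a.natDegree + b.natDegree ≤ a.natDegree := by
      rw [← Polynomial.natDegree_mul (left_ne_zero_of_mul hne) (right_ne_zero_of_mul hne), ← hab]
      exact hmin a (left_ne_zero_of_mul hne) ha
    have hb : b = .C (b.coeff 0) := Polynomial.eq_C_of_natDegree_eq_zero (by lia)
    rw [hb]
    exact (hf _ (hb ▸ hab ▸ dvd_mul_left b a)).map Polynomial.C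
  refine ⟨fun hu => (hu.map (Polynomial.aeval s)).ne_zero hs, fun a b hab => ?_⟩
  rw [hab, map_mul, mul_eq_zero] at hs
  exact (hs.imp (key a b hab) (key b a (hab.trans (mul_comm a b)))).symm

end MinimalDegree

section Descent

section CoeffwiseLinear

variable {k A B : Type*} [CommSemiring k] [Semiring A] [Semiring B] [Algebra k A] [Algebra k B]

/-- The `k`-linear map `A[X] → B[X]` that applies a `k`-linear map `l : A → B` to each
coefficient; `Polynomial.map` is the special case where `l` is multiplicative. -/
noncomputable def polynomialMapLinear (l : A →ₗ[k] B) : A[X] →ₗ[k] B[X] :=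
  Polynomial.lsum fun n => (Polynomial.monomial n).restrictScalars k ∘ₗ l

@[simp]
lemma coeff_polynomialMapLinear (l : A →ₗ[k] B) (p : A[X]) (n : ℕ) :
    (polynomialMapLinear l p).coeff n = l (p.coeff n) := by
  simp +contextual [polynomialMapLinear, Polynomial.lsum_apply, Polynomial.sum_def,
    Polynomial.coeff_monomial]

lemma polynomialMapLinear_monomial (l : A →ₗ[k] B) (n : ℕ) (a : A) :
    polynomialMapLinear l (.monomial n a) = .monomial n (l a) := by
  ext i
  rw [coeff_polynomialMapLinear, Polynomial.coeff_monomial, Polynomial.coeff_monomial, apply_ite l,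
    map_zero]

lemma natDegree_polynomialMapLinear_le (l : A →ₗ[k] B) (p : A[X]) :
    (polynomialMapLinear l p).natDegree ≤ p.natDegree :=
  Polynomial.natDegree_le_iff_coeff_eq_zero.2 fun n hn => by
    rw [coeff_polynomialMapLinear, Polynomial.coeff_eq_zero_of_natDegree_lt hn, map_zero]

end CoeffwiseLinear

variable {k K : Type*} [CommRing k] [CommRing K] [Algebra k K]

/-- The extension of a `k`-linear form on `K` to power series, coefficient by coefficient. It is
linear over `k⟦X⟧`, so it sends algebraic relations over `K[X]` between power series over `k` to
relations over `k[X]`. -/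
noncomputable def powerSeriesMapLinear (l : K →ₗ[k] k) : K⟦X⟧ →ₗ[k⟦X⟧] k⟦X⟧ where
  toFun f := PowerSeries.mk fun n => l (PowerSeries.coeff n f)
  map_add' f g := by ext n; simp
  map_smul' a f := by
    ext n
    simp only [Algebra.smul_def a f, PowerSeries.algebraMap_apply'', RingHom.id_apply, smul_eq_mul,
      PowerSeries.coeff_mk, PowerSeries.coeff_mul, PowerSeries.coeff_map, map_sum,
      ← Algebra.smul_def, map_smul]

lemma powerSeriesMapLinear_coe (l : K →ₗ[k] k) (p : K[X]) :
    powerSeriesMapLinear l (p : K⟦X⟧) = (polynomialMapLinear l p : k[X]) := by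
  ext n
  simp [powerSeriesMapLinear]

lemma aeval_polynomialMapLinear (l : K →ₗ[k] k) (s : k⟦X⟧) (Q : K[X][X]) :
    Polynomial.aeval s (polynomialMapLinear (polynomialMapLinear l) Q) =
      powerSeriesMapLinear l (Polynomial.aeval (algebraMap k⟦X⟧ K⟦X⟧ s) Q) := by
  induction Q using Polynomial.induction_on' with
  | add p q hp hq => simp only [map_add, hp, hq]
  | monomial n a =>
    rw [polynomialMapLinear_monomial, Polynomial.aeval_monomial, Polynomial.aeval_monomial,
      mul_comm, mul_comm (algebraMap K[X] K⟦X⟧ a), ← map_pow, ← Algebra.smul_def, map_smul]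
    simp [PowerSeries.algebraMap_apply', powerSeriesMapLinear_coe]

lemma exists_ne_zero_aeval_eq_zero_of_algebraMap {k : Type*} [Field k] [Algebra k K] {s : k⟦X⟧}
    {Q : K[X][X]} (hQ : Q ≠ 0) (hQs : Polynomial.aeval (algebraMap k⟦X⟧ K⟦X⟧ s) Q = 0) :
    ∃ q : k[X][X], q ≠ 0 ∧ q.natDegree ≤ Q.natDegree ∧ Polynomial.aeval s q = 0 := by
  obtain ⟨i, hi⟩ : ∃ i, Q.coeff i ≠ 0 := by simpa [Polynomial.ext_iff] using hQ
  obtain ⟨j, hj⟩ : ∃ j, (Q.coeff i).coeff j ≠ 0 := by simpa [Polynomial.ext_iff] using hi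
  obtain ⟨l, hl⟩ := Module.Projective.exists_dual_ne_zero k hj
  refine ⟨polynomialMapLinear (polynomialMapLinear l) Q, fun h0 => hl ?_,
    natDegree_polynomialMapLinear_le _ Q, by rw [aeval_polynomialMapLinear, hQs, map_zero]⟩
  rw [← coeff_polynomialMapLinear, ← coeff_polynomialMapLinear, h0, Polynomial.coeff_zero,
    Polynomial.coeff_zero]

lemma faithfulSMul_polynomial_powerSeries [FaithfulSMul k K] : FaithfulSMul k[X] K⟦X⟧ := by
  rw [faithfulSMul_iff_algebraMap_injective]
  intro p q h
  rw [PowerSeries.algebraMap_apply', PowerSeries.algebraMap_apply'] at h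
  exact Polynomial.coe_injective _
    (PowerSeries.map_injective _ (FaithfulSMul.algebraMap_injective k K) h)

variable {R : Type*} [CommRing R] [IsDomain R]

attribute [local instance] Polynomial.algebra Polynomial.isLocalization in
lemma exists_ne_zero_aeval_eq_zero_of_fractionRing {k : Type*} [Field k] [Algebra R k]
    [IsFractionRing R k] {s : k⟦X⟧} {q : k[X][X]} (hq : q ≠ 0) (hqs : Polynomial.aeval s q = 0) :
    ∃ p : R[X][X], p ≠ 0 ∧ p.natDegree ≤ q.natDegree ∧ Polynomial.aeval s p = 0 := by
  let M := (nonZeroDivisors R).map (Polynomial.C : R →+* R[X])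
  have hM : M ≤ nonZeroDivisors R[X] :=
    map_le_nonZeroDivisors_of_injective _ Polynomial.C_injective le_rfl
  have : IsScalarTower R[X] k[X] k⟦X⟧ := .of_algebraMap_eq fun g => by
    simp only [PowerSeries.algebraMap_apply', Polynomial.algebraMap_def,
      Polynomial.coe_mapRingHom, Polynomial.polynomial_map_coe, Algebra.algebraMap_self,
      PowerSeries.map_id, id_eq]
  exact ⟨IsLocalization.integerNormalization M q,
    (IsLocalization.integerNormalization_eq_zero_iff hM q).not.2 hq,
    Polynomial.natDegree_le_natDegree
      (Polynomial.degree_mono (IsLocalization.integerNormalization_support M q)),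
    IsLocalization.integerNormalization_aeval_eq_zero M q hqs⟩

lemma aeval_algebraMap_map_mapRingHom {R k K : Type*} [CommRing R] [CommRing k] [CommRing K]
    [Algebra R k] [Algebra k K] [Algebra R K] [IsScalarTower R k K] (s : k⟦X⟧) (f : R[X][X]) :
    Polynomial.aeval (algebraMap k⟦X⟧ K⟦X⟧ s)
        (f.map (Polynomial.mapRingHom (algebraMap R K))) =
      algebraMap k⟦X⟧ K⟦X⟧ (Polynomial.aeval s f) := by
  rw [Polynomial.aeval_def, Polynomial.aeval_def, Polynomial.eval₂_map, Polynomial.hom_eval₂]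
  congr 1
  ext <;> simp [PowerSeries.algebraMap_apply', PowerSeries.algebraMap_apply'',
    IsScalarTower.algebraMap_apply R k K]

theorem irreducible_map_of_aeval_powerSeries_eq_zero [UniqueFactorizationMonoid R]
    {k K : Type*} [Field k] [Algebra R k] [IsFractionRing R k] [CommRing K] [IsDomain K]
    [Algebra k K] [Algebra R K] [IsScalarTower R k K] {f : R[X][X]}
    (hdvd : ∀ d, d ∣ f → d.natDegree = 0 ∨ d.natDegree = f.natDegree) {s : k⟦X⟧}
    (hs : Polynomial.aeval s f = 0)
    (hprim : (f.map (Polynomial.mapRingHom (algebraMap R K))).IsPrimitive) :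
    Irreducible (f.map (Polynomial.mapRingHom (algebraMap R K))) := by
  have : FaithfulSMul R k := (faithfulSMul_iff_algebraMap_injective R k).2
    (IsFractionRing.injective R k)
  have : FaithfulSMul R[X] k⟦X⟧ := faithfulSMul_polynomial_powerSeries
  have hf : f ≠ 0 := fun h => hprim.ne_zero (by rw [h, Polynomial.map_zero])
  refine irreducible_of_isPrimitive_of_aeval_eq_zero hprim (s := algebraMap k⟦X⟧ K⟦X⟧ s)
    (by rw [aeval_algebraMap_map_mapRingHom, hs, map_zero]) fun Q hQ hQs => ?_
  obtain ⟨q, hq, hqQ, hqs⟩ := exists_ne_zero_aeval_eq_zero_of_algebraMap hQ hQs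
  obtain ⟨p, hp, hpq, hps⟩ := exists_ne_zero_aeval_eq_zero_of_fractionRing (R := R) hq hqs
  calc (f.map (Polynomial.mapRingHom (algebraMap R K))).natDegree
      ≤ f.natDegree := Polynomial.natDegree_map_le
    _ ≤ p.natDegree := natDegree_le_of_aeval_eq_zero hf hdvd hs hp hps
    _ ≤ Q.natDegree := hpq.trans hqQ

end Descent

section Hensel

variable {A : Type*} [CommRing A] {I : Ideal A} [HenselianRing A I]

lemma exists_unit_pow_add_sum_eq_pow {c : ℕ → A} (hc : ∀ j, c j ∈ I) (m : ℕ) :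
    ∃ v : Aˣ, (v : A) ^ (m + 2) + ∑ j ∈ Finset.range (m + 1), c j * (v : A) ^ (m - j) =
      (v : A) ^ (m + 1) := by
  let tail : A[X] := ∑ j ∈ Finset.range (m + 1), .monomial (m - j) (c j)
  let q : A[X] := .X ^ (m + 2) + (tail - .X ^ (m + 1))
  have hq : q.Monic := by
    have htail : tail ∈ Polynomial.degreeLT A (m + 2) := Submodule.sum_mem _ fun j _ =>
      Polynomial.mem_degreeLT.2 ((Polynomial.degree_monomial_le _ _).trans_lt (by norm_cast; lia))
    have hpow : (.X ^ (m + 1) : A[X]) ∈ Polynomial.degreeLT A (m + 2) :=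
      Polynomial.mem_degreeLT.2 ((Polynomial.degree_X_pow_le _).trans_lt (by norm_cast; lia))
    exact Polynomial.monic_X_pow_add (Polynomial.mem_degreeLT.1 (Submodule.sub_mem _ htail hpow))
  have heval : q.eval 1 ∈ I := by
    simpa [q, tail, Polynomial.eval_finsetSum] using I.sum_mem fun j _ => hc j
  have hderiv : q.derivative.eval 1 - 1 ∈ I := by
    have : q.derivative.eval 1 - 1 = ∑ j ∈ Finset.range (m + 1), c j * ↑(m - j) := by
      simp only [q, tail, Polynomial.derivative_sub,
        Polynomial.derivative_X_pow_succ, Polynomial.derivative_monomial, Polynomial.eval_add,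
        Polynomial.eval_sub, Polynomial.eval_mul, Polynomial.eval_pow, Polynomial.eval_X,
        Polynomial.eval_one, Polynomial.eval_natCast, Polynomial.eval_finsetSum,
        Polynomial.eval_monomial, Nat.cast_add, Nat.cast_one, map_add, map_sum, map_natCast,
        map_one, one_pow, mul_one]
      ring
    exact this ▸ I.sum_mem fun j _ => I.mul_mem_right _ (hc j)
  obtain ⟨v, hv, hv1⟩ := HenselianRing.is_henselian q hq 1 heval (by
    rw [(Ideal.Quotient.mk_eq_mk_iff_sub_mem _ _).2 hderiv, map_one]; exact isUnit_one)
  obtain ⟨v, rfl⟩ : IsUnit v := by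
    simpa using Ideal.mem_jacobson_bot.1 (HenselianRing.jac hv1) 1
  refine ⟨v, sub_eq_zero.1 ?_⟩
  rw [← hv.eq_zero]
  simp [q, tail, Polynomial.eval_finsetSum, add_sub_assoc]

-- Mathlib's `HenselianRing` only lifts roots of monic polynomials. With `a`, `b` the two lowest
-- coefficients of `p`, the substitution `x = -a / (b * v)` makes `p` monic in `v`, with a simple
-- root `v = 1` modulo `I`.
lemma exists_isRoot_of_isUnit_coeff_one {p : A[X]} (h1 : IsUnit (p.coeff 1))
    (h : ∀ j, p.coeff 0 * p.coeff (j + 2) ∈ I) : ∃ x, p.IsRoot x := by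
  obtain ⟨b, hb⟩ := h1
  set a := p.coeff 0 with ha
  set m := p.natDegree
  let c : ℕ → A := fun j => p.coeff (j + 2) * a ^ (j + 1) * (-↑b⁻¹) ^ (j + 2)
  have hc (j : ℕ) : c j ∈ I := by
    have : c j = a * p.coeff (j + 2) * (a ^ j * (-↑b⁻¹) ^ (j + 2)) := by ring
    exact this ▸ I.mul_mem_right _ (h j)
  obtain ⟨v, hv⟩ := exists_unit_pow_add_sum_eq_pow hc m
  obtain ⟨x, hx⟩ : ∃ x, ↑v * x = -a * ↑b⁻¹ := ⟨↑v⁻¹ * (-a * ↑b⁻¹), by simp⟩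
  have hlinear : ↑v ^ (m + 2) * (↑b * x) = -a * ↑v ^ (m + 1) := by
    linear_combination (↑v ^ (m + 1) * ↑b : A) * hx - a * ↑v ^ (m + 1) * b.mul_inv
  have hterm : ∀ j ∈ Finset.range (m + 1),
      ↑v ^ (m + 2) * (p.coeff (j + 2) * x ^ (j + 2)) = a * (c j * ↑v ^ (m - j)) := by
    intro j hj
    have hpow : (v : A) ^ (m + 2) = ↑v ^ (m - j) * ↑v ^ (j + 2) := by
      rw [← pow_add]
      congr 1
      have := Finset.mem_range.1 hj
      lia
    calc ↑v ^ (m + 2) * (p.coeff (j + 2) * x ^ (j + 2))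
        = ↑v ^ (m - j) * p.coeff (j + 2) * (↑v * x) ^ (j + 2) := by rw [hpow]; ring
      _ = a * (c j * ↑v ^ (m - j)) := by rw [hx]; ring
  have heval : ↑v ^ (m + 2) * p.eval x = 0 := by
    rw [Polynomial.eval_eq_sum_range' (n := m + 3) (by lia), Finset.sum_range_succ',
      Finset.sum_range_succ', zero_add, pow_one, pow_zero, mul_one, ← hb, mul_add, mul_add,
      Finset.mul_sum, Finset.sum_congr rfl hterm, hlinear, ← ha, ← Finset.mul_sum]
    linear_combination a * hv
  exact ⟨x, (v.isUnit.pow (m + 2)).mul_right_eq_zero.1 heval⟩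

end Hensel

theorem irreducible_of_irreducible_aeval {σ K A : Type*} [Field K] [CommRing A] [Algebra K A]
    {F : MvPolynomial σ K} (v : σ → A) (π : A →ₐ[K] K[X])
    (hv : ∀ i, (π (v i)).natDegree ≤ 1) (hdeg : F.totalDegree ≤ (π (aeval v F)).natDegree)
    (hirr : Irreducible (aeval v F)) : Irreducible F := by
  have hF : F ≠ 0 := fun h => hirr.ne_zero (by rw [h, map_zero])
  have key (G H : MvPolynomial σ K) (hGH : F = G * H) (hG : IsUnit (aeval v G)) : IsUnit G := by
    have hG0 : G ≠ 0 := fun h => hF (by rw [hGH, h, zero_mul])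
    have hH0 : H ≠ 0 := fun h => hF (by rw [hGH, h, mul_zero])
    have hGdeg : (π (aeval v G)).natDegree = 0 := Polynomial.natDegree_eq_zero_of_isUnit (hG.map π)
    have hHdeg : (π (aeval v H)).natDegree ≤ H.totalDegree := by
      rw [comp_aeval_apply]
      simpa using aeval_natDegree_le H le_rfl _ hv
    have hFdeg : (π (aeval v F)).natDegree ≤ (π (aeval v H)).natDegree := by
      rw [hGH, map_mul, map_mul]
      simpa [hGdeg] using Polynomial.natDegree_mul_le (p := π (aeval v G)) (q := π (aeval v H))
    have htot : F.totalDegree = G.totalDegree + H.totalDegree := by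
      rw [hGH, totalDegree_mul_of_isDomain hG0 hH0]
    rw [totalDegree_eq_zero_iff_eq_C.1 (by lia : G.totalDegree = 0)] at hG0 ⊢
    exact (isUnit_iff_ne_zero.2 fun h => hG0 (by rw [h, map_zero])).map C
  refine ⟨fun h => hirr.not_isUnit (h.map _), fun G H hGH => ?_⟩
  exact (hirr.isUnit_or_isUnit (by rw [hGH, map_mul])).imp (key G H hGH)
    (key H G (hGH.trans (mul_comm G H)))

section Sextic

variable {A B : Type*} [CommRing A] [CommRing B]

/-- The polynomial `F(1, y, t)` in the variable `y`, for `t` in an arbitrary commutative ring. -/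
noncomputable def sextic (t : A) : A[X] :=
  .C (2244375 + 358425 * t + 3645 * t ^ 2 - 9477 * t ^ 3) * .X ^ 6 +
  .C (-2549250 + 5284350 * t + 312930 * t ^ 2 - 85374 * t ^ 3 - 23328 * t ^ 4) * .X ^ 5 +
  .C (1081500 - 5674500 * t + 4652580 * t ^ 2 - 322956 * t ^ 3 - 113616 * t ^ 4 -
    15552 * t ^ 5) * .X ^ 4 +
  .C (-109000 + 2074600 * t - 4514680 * t ^ 2 + 2009592 * t ^ 3 - 411984 * t ^ 4 -
    31104 * t ^ 5 - 3024 * t ^ 6) * .X ^ 3 +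
  .C (t * (-144000 + 1278400 * t - 1482560 * t ^ 2 + 551328 * t ^ 3 - 115776 * t ^ 4 +
    2592 * t ^ 5)) * .X ^ 2 +
  .C (t ^ 2 * (-48000 + 214400 * t - 140800 * t ^ 2 + 99072 * t ^ 3 - 6912 * t ^ 4)) * .X +
  .C (t ^ 4 * (-25600 + 15360 * t - 6656 * t ^ 2))

lemma map_sextic (φ : A →+* B) (t : A) : (sextic t).map φ = sextic (φ t) := by
  simp [sextic, map_ofNat]

lemma coeff_six_sextic (t : A) :
    (sextic t).coeff 6 = 2244375 + 358425 * t + 3645 * t ^ 2 - 9477 * t ^ 3 := by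
  simp only [sextic]
  simp [-map_add, -map_sub, -map_mul]

lemma coeff_zero_sextic (t : A) :
    (sextic t).coeff 0 = t ^ 4 * (-25600 + 15360 * t - 6656 * t ^ 2) := by
  simp only [sextic]
  simp [Polynomial.coeff_C, -map_add, -map_sub, -map_mul]

lemma natDegree_sextic {t : A} (ht : 2244375 + 358425 * t + 3645 * t ^ 2 - 9477 * t ^ 3 ≠ 0) :
    (sextic t).natDegree = 6 :=
  le_antisymm (by unfold sextic; compute_degree)
    (Polynomial.le_natDegree_of_ne_zero (by rwa [coeff_six_sextic]))

lemma natDegree_sextic_X [CharZero A] : (sextic (Polynomial.X : A[X])).natDegree = 6 :=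
  natDegree_sextic fun h => by simpa using congrArg (Polynomial.eval 0) h

lemma dvd_natDegree_of_dvd_sextic_X {K : Type*} [Field K] {n : ℕ} (t : K)
    (ht : 2244375 + 358425 * t + 3645 * t ^ 2 - 9477 * t ^ 3 ≠ 0)
    (hn : ∀ e, e ∣ sextic t → n ∣ e.natDegree) {d : ℤ[X][X]}
    (hd : d ∣ sextic (Polynomial.X : ℤ[X])) : n ∣ d.natDegree := by
  let φ : ℤ[X] →+* K := Polynomial.eval₂RingHom (Int.castRingHom K) t
  have hmap : (sextic Polynomial.X).map φ = sextic t := by simp [map_sextic, φ]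
  have hsix : φ ((sextic Polynomial.X).coeff 6) ≠ 0 := by
    rwa [← Polynomial.coeff_map, hmap, coeff_six_sextic]
  have hlc : φ (sextic Polynomial.X).leadingCoeff ≠ 0 := by
    rwa [Polynomial.leadingCoeff, natDegree_sextic_X]
  rw [← natDegree_map_of_dvd φ hlc hd]
  exact hn _ (hmap ▸ Polynomial.map_dvd φ hd)

lemma sextic_zmod29_seven : sextic (7 : ZMod 29) =
    (.X ^ 3 + 12 * .X ^ 2 + 6 * .X + 25) * (11 * .X ^ 3 + 28 * .X ^ 2 + 18 * .X + 21) := by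
  simp only [sextic, map_add, map_sub, map_mul, map_pow, map_neg, map_ofNat]
  ring_nf
  reduce_mod_char
  ring_nf
  reduce_mod_char

lemma sextic_zmod29_neg_four : sextic (-4 : ZMod 29) =
    (3 * .X ^ 2 + 7) * (.X ^ 2 + 19 * .X + 17) * (.X ^ 2 + 26 * .X + 22) := by
  simp only [sextic, map_add, map_sub, map_mul, map_pow, map_neg, map_ofNat]
  ring_nf
  reduce_mod_char
  ring_nf
  reduce_mod_char

lemma dvd_natDegree_of_dvd_of_not_isRoot {K : Type*} [Field K] {g : K[X]} {n : ℕ}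
    (hn : n ∈ Finset.Icc 1 3) (hg : g.natDegree = n) (hroot : ∀ x, ¬ g.IsRoot x) :
    ∀ e, e ∣ g → n ∣ e.natDegree := fun _ he =>
  hg ▸ natDegree_dvd_natDegree_of_dvd_irreducible
    (Polynomial.irreducible_of_degree_le_three_of_not_isRoot (hg ▸ hn) hroot) he

instance fact_prime_twentyNine : Fact (Nat.Prime 29) := ⟨by norm_num⟩

lemma three_dvd_natDegree_of_dvd_sextic {e : (ZMod 29)[X]} (he : e ∣ sextic 7) :
    3 ∣ e.natDegree := by
  refine dvd_natDegree_of_dvd_mul ?_ ?_ e (sextic_zmod29_seven ▸ he) <;>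
    refine dvd_natDegree_of_dvd_of_not_isRoot (by decide) (by compute_degree!) ?_ <;>
    simp only [Polynomial.IsRoot.def, Polynomial.eval_add, Polynomial.eval_mul,
      Polynomial.eval_pow, Polynomial.eval_X, Polynomial.eval_ofNat] <;>
    decide

lemma two_dvd_natDegree_of_dvd_sextic {e : (ZMod 29)[X]} (he : e ∣ sextic (-4)) :
    2 ∣ e.natDegree := by
  refine dvd_natDegree_of_dvd_mul (dvd_natDegree_of_dvd_mul ?_ ?_) ?_ e
      (sextic_zmod29_neg_four ▸ he) <;>
    refine dvd_natDegree_of_dvd_of_not_isRoot (by decide) (by compute_degree!) ?_ <;>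
    simp only [Polynomial.IsRoot.def, Polynomial.eval_add, Polynomial.eval_mul,
      Polynomial.eval_pow, Polynomial.eval_X, Polynomial.eval_ofNat] <;>
    decide

lemma natDegree_of_dvd_sextic_X {d : ℤ[X][X]} (hd : d ∣ sextic (Polynomial.X : ℤ[X])) :
    d.natDegree = 0 ∨ d.natDegree = (sextic (Polynomial.X : ℤ[X])).natDegree := by
  have h3 : 3 ∣ d.natDegree := dvd_natDegree_of_dvd_sextic_X (7 : ZMod 29) (by decide)
    (fun _ => three_dvd_natDegree_of_dvd_sextic) hd
  have h2 : 2 ∣ d.natDegree := dvd_natDegree_of_dvd_sextic_X (-4 : ZMod 29) (by decide)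
    (fun _ => two_dvd_natDegree_of_dvd_sextic) hd
  have hdeg : (sextic (Polynomial.X : ℤ[X])).natDegree = 6 := natDegree_sextic_X
  have hle : d.natDegree ≤ 6 :=
    hdeg ▸ Polynomial.natDegree_le_of_dvd hd
      (Polynomial.ne_zero_of_natDegree_gt (n := 5) (by lia))
  rw [hdeg]
  lia

-- The Newton polygon at `t = y = 0` has an edge of slope `2`, which suggests `y = t ^ 2 * u`.
lemma exists_eval_sq_mul_sextic (t : A) : ∃ (a c : A) (r : A[X]), ∀ u,
    (sextic t).eval (t ^ 2 * u) =
      t ^ 4 * (a + (-48000 + t * c) * u + t * (r.eval u * u ^ 2)) := by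
  refine ⟨-25600 + 15360 * t - 6656 * t ^ 2,
    214400 - 140800 * t + 99072 * t ^ 2 - 6912 * t ^ 3,
    .C (-144000 + 1278400 * t - 1482560 * t ^ 2 + 551328 * t ^ 3 - 115776 * t ^ 4 +
      2592 * t ^ 5) +
    .C (t * (-109000 + 2074600 * t - 4514680 * t ^ 2 + 2009592 * t ^ 3 - 411984 * t ^ 4 -
      31104 * t ^ 5 - 3024 * t ^ 6)) * .X +
    .C (t ^ 3 * (1081500 - 5674500 * t + 4652580 * t ^ 2 - 322956 * t ^ 3 - 113616 * t ^ 4 -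
      15552 * t ^ 5)) * .X ^ 2 +
    .C (t ^ 5 * (-2549250 + 5284350 * t + 312930 * t ^ 2 - 85374 * t ^ 3 - 23328 * t ^ 4)) *
      .X ^ 3 +
    .C (t ^ 7 * (2244375 + 358425 * t + 3645 * t ^ 2 - 9477 * t ^ 3)) * .X ^ 4, fun u => ?_⟩
  simp only [sextic, Polynomial.eval_add, Polynomial.eval_mul, Polynomial.eval_C,
    Polynomial.eval_X, Polynomial.eval_pow]
  ring

lemma exists_isRoot_sextic {I : Ideal A} [HenselianRing A I] {t : A} (ht : t ∈ I)
    (hunit : IsUnit (48000 : A)) : ∃ s, (sextic t).IsRoot s := by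
  obtain ⟨a, c, r, heval⟩ := exists_eval_sq_mul_sextic t
  have hb : IsUnit (-48000 + t * c) := by
    have := isLocalHom_of_le_jacobson_bot I HenselianRing.jac
    rw [← isUnit_map_iff (Ideal.Quotient.mk I), map_add,
      Ideal.Quotient.eq_zero_iff_mem.2 (I.mul_mem_right c ht), add_zero]
    exact hunit.neg.map _
  let p : A[X] := .C a + .C (-48000 + t * c) * .X + .C t * (r * .X ^ 2)
  obtain ⟨u, hu⟩ : ∃ u, p.IsRoot u := by
    refine exists_isRoot_of_isUnit_coeff_one (I := I) ?_ fun j => I.mul_mem_left _ ?_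
    · simpa [p, Polynomial.coeff_C, Polynomial.coeff_mul_X_pow'] using hb
    · simpa [p, Polynomial.coeff_C, Polynomial.coeff_X, Polynomial.coeff_mul_X_pow'] using
        I.mul_mem_right _ ht
  have hpu : a + (-48000 + t * c) * u + t * (r.eval u * u ^ 2) = 0 := by
    simpa [p] using hu.eq_zero
  exact ⟨t ^ 2 * u, by rw [Polynomial.IsRoot.def, heval, hpu, mul_zero]⟩

lemma exists_aeval_sextic_X_eq_zero :
    ∃ s : ℚ⟦X⟧, Polynomial.aeval s (sextic (Polynomial.X : ℤ[X])) = 0 := by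
  have hunit : IsUnit (48000 : ℚ⟦X⟧) := by
    rw [PowerSeries.isUnit_iff_constantCoeff, map_ofNat]
    norm_num
  obtain ⟨s, hs⟩ := exists_isRoot_sextic (Ideal.mem_span_singleton_self PowerSeries.X) hunit
  refine ⟨s, ?_⟩
  rw [Polynomial.aeval_def, ← Polynomial.eval_map, map_sextic]
  simpa [PowerSeries.algebraMap_apply'] using hs

lemma isCoprime_of_isUnit_mul_add_mul {a b u v : A} (h : IsUnit (u * a + v * b)) :
    IsCoprime a b := by
  obtain ⟨w, hw⟩ := h.exists_right_inv
  exact ⟨u * w, v * w, by linear_combination hw⟩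

variable {K : Type*} [Field K] [CharZero K]

lemma isPrimitive_sextic_X : (sextic (Polynomial.X : K[X])).IsPrimitive := by
  have hunit (n : ℕ) [n.AtLeastTwo] : IsUnit (OfNat.ofNat n : K[X]) :=
    Polynomial.isUnit_C.2 (isUnit_iff_ne_zero.2 (OfNat.ofNat_ne_zero n))
  have hX : IsCoprime (Polynomial.X : K[X]) ((sextic .X).coeff 6) := by
    refine isCoprime_of_isUnit_mul_add_mul
      (u := -(358425 + 3645 * .X - 9477 * .X ^ 2)) (v := 1) ?_
    rw [coeff_six_sextic]
    convert hunit 2244375 using 1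
    ring
  have hquad : IsCoprime (-25600 + 15360 * .X - 6656 * .X ^ 2 : K[X])
      ((sextic .X).coeff 6) := by
    -- The cofactors come from the Euclidean algorithm over `ℚ`.
    let q : K[X] := 17667 * .X - 156665
    refine isCoprime_of_isUnit_mul_add_mul
      (u := 27 * ((675 + 351 * .X) * q - 125 * 1359 ^ 2)) (v := -6656 * q) ?_
    rw [coeff_six_sextic]
    convert hunit 2573013643200000 using 1
    ring
  intro r hr
  rw [Polynomial.C_dvd_iff_dvd_coeff] at hr
  have hzero := hr 0
  rw [coeff_zero_sextic] at hzero
  exact (hX.pow_left.mul_left hquad).isUnit_of_dvd' hzero (hr 6)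

lemma irreducible_sextic_X : Irreducible (sextic (Polynomial.X : K[X])) := by
  obtain ⟨s, hs⟩ := exists_aeval_sextic_X_eq_zero
  have hmap : (sextic (Polynomial.X : ℤ[X])).map (Polynomial.mapRingHom (algebraMap ℤ K)) =
      sextic .X := by
    rw [map_sextic, Polynomial.coe_mapRingHom, Polynomial.map_X]
  rw [← hmap]
  exact irreducible_map_of_aeval_powerSeries_eq_zero (fun _ => natDegree_of_dvd_sextic_X) hs
    (by rw [hmap]; exact isPrimitive_sextic_X)

end Sextic

section Fdeg

lemma aeval_Fdeg : aeval ![1, .X, .C .X] Fdeg = sextic (Polynomial.X : ℂ[X]) := by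
  simp only [Fdeg, x1, x2, x3, sextic, map_sub, map_add, map_neg, map_mul, map_pow, map_ofNat,
    aeval_X, Matrix.cons_val_zero, Matrix.cons_val_one, Matrix.cons_val, neg_mul]
  ring

lemma totalDegree_Fdeg_le : Fdeg.totalDegree ≤ 9 := by
  have hadd {p q : MvPolynomial (Fin 3) ℂ} (hp : p.totalDegree ≤ 9) (hq : q.totalDegree ≤ 9) :
      (p + q).totalDegree ≤ 9 :=
    (totalDegree_add p q).trans (max_le hp hq)
  have hsub {p q : MvPolynomial (Fin 3) ℂ} (hp : p.totalDegree ≤ 9) (hq : q.totalDegree ≤ 9) :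
      (p - q).totalDegree ≤ 9 :=
    (totalDegree_sub p q).trans (max_le hp hq)
  have hmul {p q : MvPolynomial (Fin 3) ℂ} {m n : ℕ} (hp : p.totalDegree ≤ m)
      (hq : q.totalDegree ≤ n) : (p * q).totalDegree ≤ m + n :=
    (totalDegree_mul p q).trans (add_le_add hp hq)
  have hX_pow (i : Fin 3) (n : ℕ) : (X i ^ n : MvPolynomial (Fin 3) ℂ).totalDegree ≤ n :=
    (totalDegree_X_pow i n).le
  have hX (i : Fin 3) : (X i : MvPolynomial (Fin 3) ℂ).totalDegree ≤ 1 := (totalDegree_X i).le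
  have hC (c : ℕ) [c.AtLeastTwo] : (OfNat.ofNat c : MvPolynomial (Fin 3) ℂ).totalDegree ≤ 0 :=
    (totalDegree_C (OfNat.ofNat c : ℂ)).le
  have hnegC (c : ℕ) [c.AtLeastTwo] :
      (-OfNat.ofNat c : MvPolynomial (Fin 3) ℂ).totalDegree ≤ 0 :=
    (totalDegree_neg _).trans_le (hC c)
  unfold Fdeg x1 x2 x3
  repeat' first | with_reducible apply hadd | with_reducible apply hsub
  all_goals
    eapply le_trans
    · with_reducible repeat' first | apply hX_pow | apply hX | apply hC | apply hnegC | apply hmul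
    · norm_num

lemma nine_le_natDegree_eval_X_sextic_X :
    9 ≤ ((sextic (Polynomial.X : ℂ[X])).eval Polynomial.X).natDegree := by
  refine Polynomial.le_natDegree_of_ne_zero ?_
  simp only [sextic, Polynomial.eval_add, Polynomial.eval_mul, Polynomial.eval_C,
    Polynomial.eval_pow, Polynomial.eval_X]
  ring_nf
  simp

end Fdeg

/-- The degeneration curve of the conic bundle in the paper's explicit example is
irreducible: the polynomial `F` is irreducible in `ℂ[x1,x2,x3]`. -/
theorem Fdeg_irreducible : Irreducible Fdeg := by
  refine irreducible_of_irreducible_aeval (A := ℂ[X][X]) ![1, .X, .C .X]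
    ((Polynomial.aeval (Polynomial.X : ℂ[X])).restrictScalars ℂ) (fun i => ?_) ?_ ?_
  · fin_cases i <;> simp
  · rw [aeval_Fdeg, AlgHom.restrictScalars_apply, Polynomial.coe_aeval_eq_eval]
    exact totalDegree_Fdeg_le.trans nine_le_natDegree_eval_X_sextic_X
  · rw [aeval_Fdeg]
    exact irreducible_sextic_X
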